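/- There exists a constant C > 0 with the following property: for every strong solution u of the abstract damped wave equation with initial data u(0) = u₀ ∈ D(A), u'(0) = u₁ ∈ H, every solution v of the associated abstract heat equation with initial value v(0) = B^{1/2}u₀ + B^{-1/2}u₁, and every t > 1, one has ‖u(t) − B^{-1/2}v(t)‖ ≤ C·t⁻¹·(‖u₀‖ + (re⟪Au₀,u₀⟫)^{1/2} + ‖u₁‖). -/

import Mathlib

open scoped ComplexInnerProductSpace

/-- A strong solution of the abstract damped wave equation `u'' + Au + Bu' = 0` on `[0,∞)`. -/
structure DampedWaveSolution
    {H : Type*} [NormedAddCommGroup H] [InnerProductSpace ℂ H] [CompleteSpace H]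
    (A : H →ₗ.[ℂ] H) (B : H →L[ℂ] H) where
  u : ℝ → H
  du : ℝ → H
  ddu : ℝ → H
  Au : ℝ → H
  mem : ∀ t : ℝ, 0 ≤ t → u t ∈ A.domain
  hAu : ∀ (t : ℝ) (ht : 0 ≤ t), A ⟨u t, mem t ht⟩ = Au t
  hdu : ∀ t : ℝ, 0 ≤ t → HasDerivWithinAt u (du t) (Set.Ici 0) t
  hddu : ∀ t : ℝ, 0 ≤ t → HasDerivWithinAt du (ddu t) (Set.Ici 0) t
  cont_ddu : ContinuousOn ddu (Set.Ici 0)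
  cont_Au : ContinuousOn Au (Set.Ici 0)
  eqn : ∀ t : ℝ, 0 ≤ t → ddu t + Au t + B (du t) = 0

/-- A solution of the associated abstract heat equation
`v' + B^{-1/2} A B^{-1/2} v = 0` on `[0,∞)`, where `Binvh` stands for `B^{-1/2}`. -/
structure HeatSolution
    {H : Type*} [NormedAddCommGroup H] [InnerProductSpace ℂ H] [CompleteSpace H]
    (A : H →ₗ.[ℂ] H) (Binvh : H →L[ℂ] H) where
  v : ℝ → H
  dv : ℝ → H
  mem : ∀ t : ℝ, 0 ≤ t → Binvh (v t) ∈ A.domain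
  hdv : ∀ t : ℝ, 0 ≤ t → HasDerivWithinAt v (dv t) (Set.Ici 0) t
  cont_dv : ContinuousOn dv (Set.Ici 0)
  eqn : ∀ (t : ℝ) (ht : 0 ≤ t), dv t + Binvh (A ⟨Binvh (v t), mem t ht⟩) = 0

/-!
Only the quadratic forms of `A` and `B` enter, so one works over `ℝ`, with `h = B^{-1/2} v`, which
solves `B h' + A h = 0` with `B h(0) = B u₀ + u₁`. The resolvent of the wave generator smooths the
wave: `u = x - x'`, where `x` and `x'` are again waves, with initial energies controlled by that of
`u`. Weighted energy estimates for these two waves bound `‖x‖`, `t ‖x'‖`, `∫ t ‖x'‖²` and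
`∫ t³ ‖x''‖²`. The difference `d = x - h` solves `B d' + A d = -x''`, and the choice of `h(0)` is
exactly what makes its first and second primitives solve the same equation with the sources `-x'`
and `B x₀ + x₀ - x`. Parabolic energy estimates, one for each of the three equations and weighted by
increasing powers of `t`, then bound `t ‖d‖`, and `‖u - h‖ ≤ ‖d‖ + ‖x'‖ = O(t⁻¹)`.
-/

open Set Filter Topology
open scoped InnerProductSpace

section Calculus

variable {E : Type*} [NormedAddCommGroup E] [NormedSpace ℝ E]

theorem mem_of_hasDerivWithinAt_mem {p : Submodule ℝ E} (hp : IsClosed (p : Set E))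
    {f f' : ℝ → E} {a : ℝ} (hf : ∀ t ∈ Ici a, HasDerivWithinAt f (f' t) (Ici a) t)
    (hf' : ∀ t ∈ Ici a, f' t ∈ p) (hfa : f a ∈ p) {t : ℝ} (ht : t ∈ Ici a) : f t ∈ p := by
  have : IsClosed (p : Set E) := hp
  have hquot : ∀ s ∈ Ici a, HasDerivWithinAt (fun s => p.mkQL (f s)) 0 (Ici a) s := fun s hs =>
    (p.mkQL.hasFDerivAt.comp_hasDerivWithinAt s (hf s hs)).congr_deriv
      ((Submodule.Quotient.mk_eq_zero p).2 (hf' s hs))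
  have hconst : p.mkQL (f t) = p.mkQL (f a) :=
    constant_of_has_deriv_right_zero
      (fun s hs => (hquot s hs.1).continuousWithinAt.mono Icc_subset_Ici_self)
      (fun s hs => (hquot s hs.1).mono (Ici_subset_Ici.2 hs.1)) t ⟨ht, le_rfl⟩
  exact (Submodule.Quotient.mk_eq_zero p).1
    (hconst.trans ((Submodule.Quotient.mk_eq_zero p).2 hfa))

theorem exists_primitive_of_continuousOn_Ici [CompleteSpace E] {f : ℝ → E} {a : ℝ}
    (hf : ContinuousOn f (Ici a)) (y : E) :
    ∃ F : ℝ → E, F a = y ∧ ∀ t ∈ Ici a, HasDerivWithinAt F (f t) (Ici a) t := by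
  have hext : Continuous (fun t : ℝ => f (max t a)) :=
    hf.comp_continuous (by fun_prop) (fun t => le_max_right t a)
  refine ⟨fun t => (∫ s in a..t, f (max s a)) + y, by simp, fun t ht => ?_⟩
  have hderiv := (hext.integral_hasStrictDerivAt a t).hasDerivAt.hasDerivWithinAt (s := Ici a)
  rw [max_eq_left (mem_Ici.1 ht)] at hderiv
  exact hderiv.add_const y

-- Variation of constants: `x t = exp t • (x₀ - ∫₀ᵗ exp (-s) • u s)`.
theorem exists_solution_deriv_eq_self_sub [CompleteSpace E] {u : ℝ → E}
    (hu : ContinuousOn u (Ici 0)) (x₀ : E) :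
    ∃ x : ℝ → E, x 0 = x₀ ∧ ∀ t ∈ Ici 0, HasDerivWithinAt x (x t - u t) (Ici 0) t := by
  obtain ⟨P, hP0, hP⟩ := exists_primitive_of_continuousOn_Ici
    (f := fun s => -(Real.exp (-s) • u s)) (by fun_prop) x₀
  refine ⟨fun t => Real.exp t • P t, by simp [hP0], fun t ht => ?_⟩
  refine ((Real.hasDerivAt_exp t).hasDerivWithinAt.smul (hP t ht)).congr_deriv ?_
  rw [smul_neg, smul_smul, ← Real.exp_add, add_neg_cancel, Real.exp_zero, one_smul]
  abel

theorem mem_of_hasDerivWithinAt_self_sub {p : Submodule ℝ E} (hp : IsClosed (p : Set E))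
    {x u : ℝ → E} (hx : ∀ t ∈ Ici 0, HasDerivWithinAt x (x t - u t) (Ici 0) t)
    (hu : ∀ t ∈ Ici 0, u t ∈ p) (hx0 : x 0 ∈ p) {t : ℝ} (ht : t ∈ Ici 0) : x t ∈ p := by
  have hderiv : ∀ s ∈ Ici (0 : ℝ), HasDerivWithinAt (fun s => Real.exp (-s) • x s)
      (-(Real.exp (-s) • u s)) (Ici 0) s := fun s hs => by
    refine ((hasDerivAt_neg s).exp.hasDerivWithinAt.smul (hx s hs)).congr_deriv ?_
    module
  have hmem := mem_of_hasDerivWithinAt_mem hp hderiv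
    (fun s hs => p.neg_mem (p.smul_mem _ (hu s hs))) (by simpa using hx0) ht
  exact (p.smul_mem_iff (Real.exp_ne_zero _)).1 hmem

theorem add_integral_le_add_integral_of_deriv_add_le {f f' p q : ℝ → ℝ} {a b : ℝ} (hab : a ≤ b)
    (hf : ∀ t ∈ Ici a, HasDerivWithinAt f (f' t) (Ici a) t)
    (hp : ContinuousOn p (Ici a)) (hq : ContinuousOn q (Ici a))
    (hle : ∀ t ∈ Ici a, f' t + p t ≤ q t) :
    f b + ∫ t in a..b, p t ≤ f a + ∫ t in a..b, q t := by
  have hsub : f b - f a ≤ ∫ t in a..b, (q t - p t) :=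
    intervalIntegral.sub_le_integral_of_hasDeriv_right_of_le hab
      (fun t ht => (hf t ht.1).continuousWithinAt.mono Icc_subset_Ici_self)
      (fun t ht => (hf t ht.1.le).mono (Ioi_subset_Ici ht.1.le))
      (((hq.sub hp).mono Icc_subset_Ici_self).integrableOn_Icc)
      (fun t ht => le_sub_iff_add_le.2 (hle t ht.1.le))
  rw [intervalIntegral.integral_sub
    ((hq.mono Icc_subset_Ici_self).intervalIntegrable_of_Icc hab)
    ((hp.mono Icc_subset_Ici_self).intervalIntegrable_of_Icc hab)] at hsub
  linarith

theorem integral_add_of_continuousOn_Ici {p q : ℝ → ℝ} {a b : ℝ} (hab : a ≤ b)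
    (hp : ContinuousOn p (Ici a)) (hq : ContinuousOn q (Ici a)) :
    ∫ t in a..b, (p t + q t) = (∫ t in a..b, p t) + ∫ t in a..b, q t :=
  intervalIntegral.integral_add
    ((hp.mono Icc_subset_Ici_self).intervalIntegrable_of_Icc hab)
    ((hq.mono Icc_subset_Ici_self).intervalIntegrable_of_Icc hab)

theorem integral_pow_succ_mul_le {g : ℝ → ℝ} {T : ℝ} (n : ℕ) (hT : 0 ≤ T)
    (hg : ContinuousOn g (Ici 0)) (hg0 : ∀ t ∈ Ici 0, 0 ≤ g t) :
    ∫ t in 0..T, t ^ (n + 1) * g t ≤ T * ∫ t in 0..T, t ^ n * g t := by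
  have hg' := hg.mono (Icc_subset_Ici_self : Icc 0 T ⊆ Ici 0)
  rw [← intervalIntegral.integral_const_mul]
  refine intervalIntegral.integral_mono_on hT
    (ContinuousOn.intervalIntegrable_of_Icc hT (by fun_prop))
    (ContinuousOn.intervalIntegrable_of_Icc hT (by fun_prop)) (fun t ht => ?_)
  rw [pow_succ', mul_assoc]
  exact mul_le_mul_of_nonneg_right ht.2 (mul_nonneg (pow_nonneg ht.1 n) (hg0 t ht.1))

theorem integral_le_mul_of_le {g : ℝ → ℝ} {N T : ℝ} (hT : 0 ≤ T) (hg : ContinuousOn g (Ici 0))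
    (hgN : ∀ t ∈ Ici 0, g t ≤ N) : ∫ t in 0..T, g t ≤ T * N := by
  have hmono := intervalIntegral.integral_mono_on (μ := MeasureTheory.volume) hT
    ((hg.mono Icc_subset_Ici_self).intervalIntegrable_of_Icc hT)
    (intervalIntegrable_const (c := N)) (fun t ht => hgN t ht.1)
  simpa using hmono

end Calculus

theorem norm_sub_sq_le_two_mul {E : Type*} [SeminormedAddGroup E] (x y : E) :
    ‖x - y‖ ^ 2 ≤ 2 * ‖x‖ ^ 2 + 2 * ‖y‖ ^ 2 :=
  calc ‖x - y‖ ^ 2 ≤ (‖x‖ + ‖y‖) ^ 2 := by gcongr; exact norm_sub_le x y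
    _ ≤ 2 * (‖x‖ ^ 2 + ‖y‖ ^ 2) := add_sq_le
    _ = 2 * ‖x‖ ^ 2 + 2 * ‖y‖ ^ 2 := mul_add _ _ _

section Forms

variable {H : Type*} [NormedAddCommGroup H] [InnerProductSpace ℝ H]

theorem two_mul_inner_le_div_add_mul (x y : H) {r : ℝ} (hr : 0 < r) :
    2 * ⟪x, y⟫_ℝ ≤ ‖x‖ ^ 2 / r + r * ‖y‖ ^ 2 := by
  have hsq : ‖x‖ ^ 2 / r + r * ‖y‖ ^ 2 - 2 * (‖x‖ * ‖y‖) = (‖x‖ - r * ‖y‖) ^ 2 / r := by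
    field_simp
    ring
  have hnonneg : 0 ≤ (‖x‖ - r * ‖y‖) ^ 2 / r := by positivity
  linarith [real_inner_le_norm x y]

/-- A nonnegative self-adjoint operator, given by its graph, a linear relation in `H × H`.
Graphs keep the real-scalar theory free of subtype-valued arguments. -/
structure IsNonnegSelfAdjoint (Γ : Submodule ℝ (H × H)) : Prop where
  adjoint_eq : Γ.adjoint = Γ
  nonneg : ∀ ⦃x y : H⦄, (x, y) ∈ Γ → 0 ≤ ⟪y, x⟫_ℝ

/-- A bounded symmetric operator with `c ≤ B` for some `0 < c`. -/
structure IsCoerciveSymmetric (B : H →L[ℝ] H) (c : ℝ) : Prop where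
  symm : (B : H →ₗ[ℝ] H).IsSymmetric
  pos : 0 < c
  le_inner : ∀ x, c * ‖x‖ ^ 2 ≤ ⟪B x, x⟫_ℝ

variable {Γ : Submodule ℝ (H × H)} {B : H →L[ℝ] H} {c : ℝ}

theorem IsNonnegSelfAdjoint.mem_iff (hΓ : IsNonnegSelfAdjoint Γ) {x y : H} :
    (x, y) ∈ Γ ↔ ∀ x' y', (x', y') ∈ Γ → ⟪y', x⟫_ℝ = ⟪x', y⟫_ℝ := by
  conv_lhs => rw [← hΓ.adjoint_eq]
  simp only [Submodule.mem_adjoint_iff, sub_eq_zero]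

theorem IsNonnegSelfAdjoint.inner_comm (hΓ : IsNonnegSelfAdjoint Γ) {x y x' y' : H}
    (h : (x, y) ∈ Γ) (h' : (x', y') ∈ Γ) : ⟪y, x'⟫_ℝ = ⟪x, y'⟫_ℝ :=
  hΓ.mem_iff.1 h' x y h

theorem IsNonnegSelfAdjoint.isClosed (hΓ : IsNonnegSelfAdjoint Γ) :
    IsClosed (Γ : Set (H × H)) := by
  have hset : (Γ : Set (H × H)) = ⋂ q ∈ Γ, {p | ⟪q.2, p.1⟫_ℝ = ⟪q.1, p.2⟫_ℝ} := by
    ext ⟨x, y⟩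
    rw [SetLike.mem_coe, hΓ.mem_iff]
    simp only [mem_iInter, mem_ofPred_eq, Prod.forall]
  rw [hset]
  exact isClosed_biInter fun q _ => isClosed_eq (by fun_prop) (by fun_prop)

theorem IsNonnegSelfAdjoint.inner_sub_le (hΓ : IsNonnegSelfAdjoint Γ) {x y x' y' : H}
    (h : (x, y) ∈ Γ) (h' : (x', y') ∈ Γ) :
    ⟪y - y', x - x'⟫_ℝ ≤ 2 * ⟪y, x⟫_ℝ + 2 * ⟪y', x'⟫_ℝ := by
  have hadd := hΓ.nonneg (Γ.add_mem h h')
  simp only [inner_add_left, inner_add_right] at hadd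
  simp only [inner_sub_left, inner_sub_right]
  linarith

-- The difference quotient at `t` is `⟪y s + y t, (x s - x t) / (s - t)⟫` by symmetry of `Γ`, so
-- `y` itself need not be differentiable.
theorem IsNonnegSelfAdjoint.hasDerivWithinAt_inner (hΓ : IsNonnegSelfAdjoint Γ) {x y : ℝ → H}
    {x' : H} {s : Set ℝ} {t : ℝ} (ht : t ∈ s) (hmem : ∀ r ∈ s, (x r, y r) ∈ Γ)
    (hx : HasDerivWithinAt x x' s t) (hy : ContinuousWithinAt y s t) :
    HasDerivWithinAt (fun r => ⟪y r, x r⟫_ℝ) (2 * ⟪y t, x'⟫_ℝ) s t := by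
  rw [hasDerivWithinAt_iff_tendsto_slope] at hx ⊢
  have hy' : Tendsto y (𝓝[s \ {t}] t) (𝓝 (y t)) := hy.mono_left (nhdsWithin_mono _ sdiff_subset)
  have hlim := (hy'.add_const (y t)).inner (𝕜 := ℝ) hx
  rw [← two_smul ℝ, real_inner_smul_left] at hlim
  refine hlim.congr' ?_
  filter_upwards [self_mem_nhdsWithin] with r hr
  have hcross : ⟪y r, x t⟫_ℝ = ⟪y t, x r⟫_ℝ := by
    rw [hΓ.inner_comm (hmem r hr.1) (hmem t ht), real_inner_comm]
  simp only [slope, vsub_eq_sub, real_inner_smul_right, inner_add_left, inner_sub_right,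
    smul_eq_mul, hcross]
  ring

theorem inner_map_comm (hB : (B : H →ₗ[ℝ] H).IsSymmetric) (x y : H) :
    ⟪B x, y⟫_ℝ = ⟪B y, x⟫_ℝ :=
  (hB x y).trans (real_inner_comm _ _)

theorem hasDerivWithinAt_inner_map_self (hB : (B : H →ₗ[ℝ] H).IsSymmetric) {x : ℝ → H} {x' : H}
    {s : Set ℝ} {t : ℝ} (hx : HasDerivWithinAt x x' s t) :
    HasDerivWithinAt (fun r => ⟪B (x r), x r⟫_ℝ) (2 * ⟪B (x t), x'⟫_ℝ) s t := by
  refine ((B.hasFDerivAt.comp_hasDerivWithinAt t hx).inner ℝ hx).congr_deriv ?_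
  rw [Function.comp_apply, inner_map_comm hB x']
  ring

theorem inner_map_self_le (B : H →L[ℝ] H) (x : H) : ⟪B x, x⟫_ℝ ≤ ‖B‖ * ‖x‖ ^ 2 :=
  calc ⟪B x, x⟫_ℝ ≤ ‖B x‖ * ‖x‖ := real_inner_le_norm _ _
    _ ≤ ‖B‖ * ‖x‖ * ‖x‖ := by gcongr; exact B.le_opNorm x
    _ = ‖B‖ * ‖x‖ ^ 2 := by ring

theorem norm_map_add_self_sub_sq_le (B : H →L[ℝ] H) (x y : H) :
    ‖B x + x - y‖ ^ 2 ≤ 2 * ((‖B‖ + 1) ^ 2 * ‖x‖ ^ 2) + 2 * ‖y‖ ^ 2 := by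
  have hle : ‖B x + x‖ ≤ (‖B‖ + 1) * ‖x‖ := by
    linarith [norm_add_le (B x) x, B.le_opNorm x]
  have hsq : ‖B x + x‖ ^ 2 ≤ (‖B‖ + 1) ^ 2 * ‖x‖ ^ 2 := by
    rw [← mul_pow]
    gcongr
  linarith [norm_sub_sq_le_two_mul (B x + x) y]

theorem IsCoerciveSymmetric.inner_nonneg (hB : IsCoerciveSymmetric B c) (x : H) :
    0 ≤ ⟪B x, x⟫_ℝ :=
  (mul_nonneg hB.pos.le (sq_nonneg _)).trans (hB.le_inner x)

end Forms

section Resolvent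

variable {H : Type*} [NormedAddCommGroup H] [InnerProductSpace ℝ H] {Γ : Submodule ℝ (H × H)}
  {K : H →L[ℝ] H}

theorem norm_le_norm_add_map (hΓ : ∀ ⦃x y : H⦄, (x, y) ∈ Γ → 0 ≤ ⟪y, x⟫_ℝ)
    (hK : ∀ x, ‖x‖ ^ 2 ≤ ⟪K x, x⟫_ℝ) {x y : H} (hxy : (x, y) ∈ Γ) : ‖x‖ ≤ ‖y + K x‖ := by
  rcases (norm_nonneg x).eq_or_lt with hx | hx
  · exact hx ▸ norm_nonneg _
  · refine le_of_mul_le_mul_right ?_ hx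
    calc ‖x‖ * ‖x‖ ≤ ⟪y, x⟫_ℝ + ⟪K x, x⟫_ℝ := by nlinarith [hK x, hΓ hxy]
      _ = ⟪y + K x, x⟫_ℝ := (inner_add_left _ _ _).symm
      _ ≤ ‖y + K x‖ * ‖x‖ := real_inner_le_norm _ _

theorem IsNonnegSelfAdjoint.eq_zero_of_inner_add_map_eq_zero [CompleteSpace H]
    (hΓ : IsNonnegSelfAdjoint Γ) (hK : ∀ x, ‖x‖ ^ 2 ≤ ⟪K x, x⟫_ℝ) {w : H}
    (hw : ∀ x y, (x, y) ∈ Γ → ⟪y + K x, w⟫_ℝ = 0) : w = 0 := by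
  have hmem : (w, -K.adjoint w) ∈ Γ := hΓ.mem_iff.2 fun x y hxy => by
    have horth := hw x y hxy
    rw [inner_add_left] at horth
    rw [inner_neg_right, ContinuousLinearMap.adjoint_inner_right]
    linarith
  have hnonneg := hΓ.nonneg hmem
  rw [inner_neg_left, ContinuousLinearMap.adjoint_inner_left, real_inner_comm] at hnonneg
  have hsq : ‖w‖ ^ 2 = 0 := le_antisymm (by linarith [hK w]) (sq_nonneg ‖w‖)
  exact norm_eq_zero.1 (pow_eq_zero_iff two_ne_zero |>.1 hsq)

theorem IsNonnegSelfAdjoint.exists_mem_add_eq [CompleteSpace H] (hΓ : IsNonnegSelfAdjoint Γ)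
    (hK : ∀ x, ‖x‖ ^ 2 ≤ ⟪K x, x⟫_ℝ) (z : H) : ∃ x y, (x, y) ∈ Γ ∧ y + K x = z := by
  let Φ : Γ →L[ℝ] H :=
    (ContinuousLinearMap.snd ℝ H H + K ∘L ContinuousLinearMap.fst ℝ H H) ∘L Γ.subtypeL
  have hΦ : ∀ p : Γ, Φ p = p.1.2 + K p.1.1 := fun p => rfl
  have hbound : ∀ p : Γ, ‖p‖ ≤ (1 + ‖K‖₊ : NNReal) * ‖Φ p‖ := by
    rintro ⟨⟨x, y⟩, hp⟩
    have hx : ‖x‖ ≤ ‖y + K x‖ := norm_le_norm_add_map hΓ.nonneg hK hp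
    have hKx : ‖K x‖ ≤ ‖K‖ * ‖y + K x‖ := K.le_opNorm_of_le hx
    have hy : ‖y‖ ≤ ‖y + K x‖ + ‖K x‖ := norm_le_add_norm_add y (K x)
    have hz : 0 ≤ ‖K‖ * ‖y + K x‖ := by positivity
    rw [hΦ, Submodule.coe_norm, norm_prod_le_iff]
    push_cast
    constructor <;> linarith
  have : CompleteSpace Γ := hΓ.isClosed.completeSpace_coe
  have hclosed : IsClosed (Φ.range : Set H) :=
    (Φ.antilipschitz_of_bound hbound).isClosed_range Φ.uniformContinuous
  have hperp : Φ.rangeᗮ = ⊥ := (Submodule.eq_bot_iff _).2 fun w hw =>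
    hΓ.eq_zero_of_inner_add_map_eq_zero hK fun x y hxy => hw _ ⟨⟨(x, y), hxy⟩, rfl⟩
  have htop : Φ.range = ⊤ := by
    have : CompleteSpace Φ.range := hclosed.completeSpace_coe
    exact Submodule.orthogonal_eq_bot_iff.1 hperp
  obtain ⟨⟨⟨x, y⟩, hxy⟩, rfl⟩ : z ∈ Φ.range := htop ▸ Submodule.mem_top
  exact ⟨x, y, hxy, rfl⟩

end Resolvent

section Heat

variable {H : Type*} [NormedAddCommGroup H] [InnerProductSpace ℝ H]

/-- `f` solves `B f' + A f = F` on `[0, ∞)`, where `A` has graph `Γ` and `g` is `f'`. -/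
structure IsForcedHeat (Γ : Submodule ℝ (H × H)) (B : H →L[ℝ] H) (F f g : ℝ → H) : Prop where
  mem : ∀ t ∈ Ici 0, (f t, F t - B (g t)) ∈ Γ
  hasDeriv : ∀ t ∈ Ici 0, HasDerivWithinAt f (g t) (Ici 0) t

namespace IsForcedHeat

variable {Γ : Submodule ℝ (H × H)} {B : H →L[ℝ] H} {c : ℝ} {F F' f g g' : ℝ → H}

theorem continuousOn (hf : IsForcedHeat Γ B F f g) : ContinuousOn f (Ici 0) :=
  fun t ht => (hf.hasDeriv t ht).continuousWithinAt

theorem sub {F₂ f₂ g₂ : ℝ → H} (hf : IsForcedHeat Γ B F f g) (hf₂ : IsForcedHeat Γ B F₂ f₂ g₂) :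
    IsForcedHeat Γ B (F - F₂) (f - f₂) (g - g₂) where
  mem t ht := by
    convert Γ.sub_mem (hf.mem t ht) (hf₂.mem t ht) using 1
    simp only [Pi.sub_apply, map_sub, Prod.mk_sub_mk]
    abel_nf
  hasDeriv t ht := (hf.hasDeriv t ht).sub (hf₂.hasDeriv t ht)

theorem primitive (hΓ : IsClosed (Γ : Set (H × H))) (hg : IsForcedHeat Γ B F' g g')
    (hf : ∀ t ∈ Ici 0, HasDerivWithinAt f (g t) (Ici 0) t)
    (hF : ∀ t ∈ Ici 0, HasDerivWithinAt F (F' t) (Ici 0) t)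
    (h0 : (f 0, F 0 - B (g 0)) ∈ Γ) : IsForcedHeat Γ B F f g where
  mem _ ht := mem_of_hasDerivWithinAt_mem hΓ (fun s hs => (hf s hs).prodMk
    ((hF s hs).sub (B.hasFDerivAt.comp_hasDerivWithinAt s (hg.hasDeriv s hs)))) hg.mem h0 ht
  hasDeriv := hf

-- Test the equation against `g`.
theorem integral_norm_deriv_sq_le (hΓ : IsNonnegSelfAdjoint Γ) (hB : IsCoerciveSymmetric B c)
    (hf : IsForcedHeat Γ B F f g) (hF : ContinuousOn F (Ici 0)) (hg : ContinuousOn g (Ici 0))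
    (hf0 : f 0 = 0) {T : ℝ} (hT : 0 ≤ T) :
    c * ∫ t in 0..T, ‖g t‖ ^ 2 ≤ c⁻¹ * ∫ t in 0..T, ‖F t‖ ^ 2 := by
  have hcont : ContinuousOn (fun t => F t - B (g t)) (Ici 0) := by fun_prop
  have henergy := add_integral_le_add_integral_of_deriv_add_le hT
    (p := fun t => c * ‖g t‖ ^ 2) (q := fun t => c⁻¹ * ‖F t‖ ^ 2)
    (fun t ht => hΓ.hasDerivWithinAt_inner ht hf.mem (hf.hasDeriv t ht) (hcont t ht))
    (by fun_prop) (by fun_prop) (fun t _ => by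
      have hyoung := two_mul_inner_le_div_add_mul (F t) (g t) hB.pos
      rw [div_eq_inv_mul] at hyoung
      rw [inner_sub_left]
      linarith [hB.le_inner (g t)])
  simp only [intervalIntegral.integral_const_mul, hf0, inner_zero_right] at henergy
  linarith [hΓ.nonneg (hf.mem T hT)]

-- Test the equation against `t f` and `t² g`.
theorem integral_sq_mul_norm_deriv_sq_le (hΓ : IsNonnegSelfAdjoint Γ)
    (hB : IsCoerciveSymmetric B c) (hf : IsForcedHeat Γ B F f g) (hF : ContinuousOn F (Ici 0))
    (hg : ContinuousOn g (Ici 0)) {T : ℝ} (hT : 0 ≤ T) :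
    c * ∫ t in 0..T, t ^ 2 * ‖g t‖ ^ 2 ≤
      (‖B‖ + 1) * (∫ t in 0..T, ‖f t‖ ^ 2) + (1 + c⁻¹) * ∫ t in 0..T, t ^ 2 * ‖F t‖ ^ 2 := by
  have hcf := hf.continuousOn
  have hcont : ContinuousOn (fun t => F t - B (g t)) (Ici 0) := by fun_prop
  have henergy := add_integral_le_add_integral_of_deriv_add_le hT
    (f := fun t => t * ⟪B (f t), f t⟫_ℝ + t ^ 2 * ⟪F t - B (g t), f t⟫_ℝ)
    (p := fun t => c * (t ^ 2 * ‖g t‖ ^ 2))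
    (q := fun t => (‖B‖ + 1) * ‖f t‖ ^ 2 + (1 + c⁻¹) * (t ^ 2 * ‖F t‖ ^ 2))
    (fun t ht => ((hasDerivWithinAt_id t _).mul
      (hasDerivWithinAt_inner_map_self hB.symm (hf.hasDeriv t ht))).add
      ((hasDerivAt_pow 2 t).hasDerivWithinAt.mul
        (hΓ.hasDerivWithinAt_inner ht hf.mem (hf.hasDeriv t ht) (hcont t ht))))
    (by fun_prop) (by fun_prop) (fun t _ => by
      have hyoung₁ := two_mul_inner_le_div_add_mul (t • F t) (f t) one_pos
      have hyoung₂ := two_mul_inner_le_div_add_mul (F t) (g t) hB.pos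
      rw [real_inner_smul_left, norm_smul, mul_pow, Real.norm_eq_abs, sq_abs] at hyoung₁
      rw [div_eq_inv_mul] at hyoung₂
      simp only [id, inner_sub_left, inner_map_comm hB.symm (g t)]
      have hfB := inner_map_self_le B (f t)
      have hgB := hB.le_inner (g t)
      push_cast
      nlinarith [mul_le_mul_of_nonneg_left (hyoung₂.trans (add_le_add_right hgB _))
        (sq_nonneg t)])
  rw [integral_add_of_continuousOn_Ici hT (by fun_prop) (by fun_prop)] at henergy
  simp only [intervalIntegral.integral_const_mul, zero_mul, ne_eq, OfNat.ofNat_ne_zero,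
    not_false_eq_true, zero_pow] at henergy
  have hBT := mul_nonneg hT (hB.inner_nonneg (f T))
  have hAT := mul_nonneg (sq_nonneg T) (hΓ.nonneg (hf.mem T hT))
  linarith

-- Test the equation against `t³ f`.
theorem pow_three_mul_norm_sq_le (hΓ : IsNonnegSelfAdjoint Γ)
    (hB : IsCoerciveSymmetric B c) (hf : IsForcedHeat Γ B F f g) (hF : ContinuousOn F (Ici 0))
    {T : ℝ} (hT : 0 ≤ T) :
    c * (T ^ 3 * ‖f T‖ ^ 2) ≤
      (3 * ‖B‖ + 1) * (∫ t in 0..T, t ^ 2 * ‖f t‖ ^ 2) + ∫ t in 0..T, t ^ 4 * ‖F t‖ ^ 2 := by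
  have hcf := hf.continuousOn
  have henergy := add_integral_le_add_integral_of_deriv_add_le hT
    (f := fun t => t ^ 3 * ⟪B (f t), f t⟫_ℝ) (p := fun _ => 0)
    (q := fun t => (3 * ‖B‖ + 1) * (t ^ 2 * ‖f t‖ ^ 2) + t ^ 4 * ‖F t‖ ^ 2)
    (fun t ht => (hasDerivAt_pow 3 t).hasDerivWithinAt.mul
      (hasDerivWithinAt_inner_map_self hB.symm (hf.hasDeriv t ht)))
    (by fun_prop) (by fun_prop) (fun t ht => by
      have hyoung := two_mul_inner_le_div_add_mul (t • F t) (f t) one_pos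
      rw [real_inner_smul_left, norm_smul, mul_pow, Real.norm_eq_abs, sq_abs] at hyoung
      have hA := mul_nonneg (pow_nonneg (mem_Ici.1 ht) 3) (hΓ.nonneg (hf.mem t ht))
      rw [inner_sub_left, inner_map_comm hB.symm (g t)] at hA
      push_cast
      nlinarith [mul_le_mul_of_nonneg_left hyoung (sq_nonneg t),
        mul_le_mul_of_nonneg_left (inner_map_self_le B (f t)) (sq_nonneg t)])
  rw [integral_add_of_continuousOn_Ici hT (by fun_prop) (by fun_prop)] at henergy
  simp only [intervalIntegral.integral_const_mul, intervalIntegral.integral_zero, zero_mul, ne_eq,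
    OfNat.ofNat_ne_zero, not_false_eq_true, zero_pow] at henergy
  linarith [mul_le_mul_of_nonneg_left (hB.le_inner (f T)) (pow_nonneg hT 3)]

theorem sq_mul_norm_sq_le_of_primitives (hΓ : IsNonnegSelfAdjoint Γ)
    (hB : IsCoerciveSymmetric B c) {F₂ F₁ F d₂ d₁ d d' : ℝ → H} (hd₂ : IsForcedHeat Γ B F₂ d₂ d₁)
    (hd₁ : IsForcedHeat Γ B F₁ d₁ d) (hd : IsForcedHeat Γ B F d d')
    (hF₂ : ContinuousOn F₂ (Ici 0)) (hF₁ : ContinuousOn F₁ (Ici 0)) (hF : ContinuousOn F (Ici 0))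
    (hd₂0 : d₂ 0 = 0) {N T : ℝ} (hT : 0 < T) (hF₂N : ∀ t ∈ Ici 0, ‖F₂ t‖ ^ 2 ≤ N)
    (hF₁N : ∫ t in 0..T, t * ‖F₁ t‖ ^ 2 ≤ N) (hFN : ∫ t in 0..T, t ^ 3 * ‖F t‖ ^ 2 ≤ N) :
    T ^ 2 * ‖d T‖ ^ 2 ≤
      ((3 * ‖B‖ + 1) * (((‖B‖ + 1) * (c⁻¹ * c⁻¹) + (1 + c⁻¹)) * c⁻¹) + 1) * c⁻¹ * N := by
  have hc := hB.pos
  have hF₂T : ∫ t in 0..T, ‖F₂ t‖ ^ 2 ≤ T * N := integral_le_mul_of_le hT.le (by fun_prop) hF₂N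
  have hF₁T : ∫ t in 0..T, t ^ 2 * ‖F₁ t‖ ^ 2 ≤ T * N :=
    (integral_pow_succ_mul_le 1 hT.le (by fun_prop) (fun _ _ => sq_nonneg _)).trans
      (mul_le_mul_of_nonneg_left (by simpa using hF₁N) hT.le)
  have hFT : ∫ t in 0..T, t ^ 4 * ‖F t‖ ^ 2 ≤ T * N :=
    (integral_pow_succ_mul_le 3 hT.le (by fun_prop) (fun _ _ => sq_nonneg _)).trans
      (mul_le_mul_of_nonneg_left hFN hT.le)
  have hd₁T : ∫ t in 0..T, ‖d₁ t‖ ^ 2 ≤ c⁻¹ * c⁻¹ * (T * N) := by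
    have h := hd₂.integral_norm_deriv_sq_le hΓ hB hF₂ hd₁.continuousOn hd₂0 hT.le
    rw [← le_inv_mul_iff₀ hc, ← mul_assoc] at h
    exact h.trans (by gcongr)
  have hdT : ∫ t in 0..T, t ^ 2 * ‖d t‖ ^ 2 ≤
      ((‖B‖ + 1) * (c⁻¹ * c⁻¹) + (1 + c⁻¹)) * c⁻¹ * (T * N) := by
    have h := hd₁.integral_sq_mul_norm_deriv_sq_le hΓ hB hF₁ hd.continuousOn hT.le
    rw [← le_inv_mul_iff₀ hc] at h
    calc _ ≤ c⁻¹ * ((‖B‖ + 1) * (c⁻¹ * c⁻¹ * (T * N)) + (1 + c⁻¹) * (T * N)) :=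
          h.trans (by gcongr)
      _ = _ := by ring
  have h := hd.pow_three_mul_norm_sq_le hΓ hB hF hT.le
  rw [← le_inv_mul_iff₀ hc] at h
  refine le_of_mul_le_mul_left (a := T) ?_ hT
  calc T * (T ^ 2 * ‖d T‖ ^ 2) = T ^ 3 * ‖d T‖ ^ 2 := by ring
    _ ≤ c⁻¹ * ((3 * ‖B‖ + 1) * (((‖B‖ + 1) * (c⁻¹ * c⁻¹) + (1 + c⁻¹)) * c⁻¹ * (T * N)) + T * N) :=
      h.trans (by gcongr)
    _ = _ := by ring

end IsForcedHeat

end Heat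

section Wave

variable {H : Type*} [NormedAddCommGroup H] [InnerProductSpace ℝ H]

/-- `u` solves `u'' + A u + B u' = 0` on `[0, ∞)`, where `A` has graph `Γ`, `v` is `u'` and `a` is
`A u`. -/
structure IsDampedWave (Γ : Submodule ℝ (H × H)) (B : H →L[ℝ] H) (u v a : ℝ → H) : Prop where
  mem : ∀ t ∈ Ici 0, (u t, a t) ∈ Γ
  hasDeriv : ∀ t ∈ Ici 0, HasDerivWithinAt u (v t) (Ici 0) t
  hasDeriv_velocity : ∀ t ∈ Ici 0, HasDerivWithinAt v (-a t - B (v t)) (Ici 0) t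
  continuousOn : ContinuousOn a (Ici 0)

/-- Twice the energy of a wave with position `u`, velocity `v` and `a = A u`. -/
def waveEnergy (u v a : H) : ℝ := ‖v‖ ^ 2 + ⟪a, u⟫_ℝ

/-- The energy perturbed by lower order terms so that, unlike the energy itself, it controls `‖u‖`
and decays at a rate bounded below by the energy. -/
noncomputable def waveLyapunov (B : H →L[ℝ] H) (c : ℝ) (u v a : H) : ℝ :=
  2 / c * waveEnergy u v a + 2 * ⟪v, u⟫_ℝ + ⟪B u, u⟫_ℝ

/-- The square of the norm of the phase space `D(A^{1/2}) × H`, at position `u` and velocity `v`,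
with `a = A u`. -/
def phaseNormSq (u v a : H) : ℝ := ‖u‖ ^ 2 + waveEnergy u v a

variable {Γ : Submodule ℝ (H × H)} {B : H →L[ℝ] H} {c : ℝ}

theorem waveEnergy_nonneg (hΓ : IsNonnegSelfAdjoint Γ) {u a : H} (h : (u, a) ∈ Γ) (v : H) :
    0 ≤ waveEnergy u v a :=
  add_nonneg (sq_nonneg _) (hΓ.nonneg h)

theorem phaseNormSq_nonneg (hΓ : IsNonnegSelfAdjoint Γ) {u a : H} (h : (u, a) ∈ Γ) (v : H) :
    0 ≤ phaseNormSq u v a :=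
  add_nonneg (sq_nonneg _) (waveEnergy_nonneg hΓ h v)

theorem phaseNormSq_le_sq {u a : H} (ha : 0 ≤ ⟪a, u⟫_ℝ) (v : H) :
    phaseNormSq u v a ≤ (‖u‖ + √⟪a, u⟫_ℝ + ‖v‖) ^ 2 := by
  have hsqrt : √⟪a, u⟫_ℝ ^ 2 = ⟪a, u⟫_ℝ := Real.sq_sqrt ha
  rw [phaseNormSq, waveEnergy]
  nlinarith [mul_nonneg (norm_nonneg u) (Real.sqrt_nonneg ⟪a, u⟫_ℝ),
    mul_nonneg (norm_nonneg u) (norm_nonneg v),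
    mul_nonneg (Real.sqrt_nonneg ⟪a, u⟫_ℝ) (norm_nonneg v)]

theorem half_mul_norm_sq_le_waveLyapunov (hΓ : IsNonnegSelfAdjoint Γ)
    (hB : IsCoerciveSymmetric B c) {u a : H} (h : (u, a) ∈ Γ) (v : H) :
    c / 2 * ‖u‖ ^ 2 ≤ waveLyapunov B c u v a := by
  have hyoung := two_mul_inner_le_div_add_mul (-v) u (half_pos hB.pos)
  rw [inner_neg_left, norm_neg] at hyoung
  have hcoef : ‖v‖ ^ 2 / (c / 2) = 2 / c * ‖v‖ ^ 2 := by field_simp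
  have ha : 0 ≤ 2 / c * ⟪a, u⟫_ℝ := mul_nonneg (div_nonneg zero_le_two hB.pos.le) (hΓ.nonneg h)
  rw [waveLyapunov, waveEnergy, mul_add]
  linarith [hB.le_inner u]

theorem waveLyapunov_le (hΓ : IsNonnegSelfAdjoint Γ) (hB : IsCoerciveSymmetric B c) {u a : H}
    (h : (u, a) ∈ Γ) (v : H) :
    waveLyapunov B c u v a ≤ (2 / c + 1 + ‖B‖) * phaseNormSq u v a := by
  have hc := hB.pos
  have hyoung := two_mul_inner_le_div_add_mul v u one_pos
  have ha := hΓ.nonneg h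
  have hu : 0 ≤ 2 / c * ‖u‖ ^ 2 := by positivity
  have he : 0 ≤ ‖B‖ * waveEnergy u v a := mul_nonneg (norm_nonneg B) (waveEnergy_nonneg hΓ h v)
  have hBu := inner_map_self_le B u
  rw [waveLyapunov, phaseNormSq]
  rw [waveEnergy] at he ⊢
  linarith

theorem deriv_lyapunov_le (hB : IsCoerciveSymmetric B c) (u v a : H) :
    2 * ‖v‖ ^ 2 - 2 * ⟪a, u⟫_ℝ - 4 / c * ⟪B v, v⟫_ℝ ≤ -(2 * waveEnergy u v a) := by
  have hc := hB.pos
  have hv : ‖v‖ ^ 2 ≤ ⟪B v, v⟫_ℝ / c := (le_div_iff₀' hc).2 (hB.le_inner v)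
  have hcoef : 4 / c * ⟪B v, v⟫_ℝ = 4 * (⟪B v, v⟫_ℝ / c) := by ring
  rw [waveEnergy]
  linarith

theorem phaseNormSq_sub_le (hΓ : IsNonnegSelfAdjoint Γ) {u v a u₂ v₂ a₂ : H} (h : (u, a) ∈ Γ)
    (h₂ : (u₂, a₂) ∈ Γ) : phaseNormSq (u - u₂) (v - v₂) (a - a₂) ≤
      2 * phaseNormSq u v a + 2 * phaseNormSq u₂ v₂ a₂ := by
  simp only [phaseNormSq, waveEnergy]
  linarith [norm_sub_sq_le_two_mul u u₂, norm_sub_sq_le_two_mul v v₂, hΓ.inner_sub_le h h₂]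

theorem phaseNormSq_le_of_resolvent_eq (hΓ : IsNonnegSelfAdjoint Γ)
    (hB : IsCoerciveSymmetric B c) {u v a x b : H} (hu : (u, a) ∈ Γ) (hx : (x, b) ∈ Γ)
    (heq : b + (B x + x) = v + (B u + u)) :
    phaseNormSq x (x - u) b ≤ (6 * (1 + ‖B‖) ^ 2 + 2) * phaseNormSq u v a := by
  have hyoung := two_mul_inner_le_div_add_mul (b + (B x + x)) x one_pos
  rw [inner_add_left, inner_add_left, real_inner_self_eq_norm_sq, heq] at hyoung
  have hnorm : ‖v + (B u + u)‖ ^ 2 ≤ 2 * (1 + ‖B‖) ^ 2 * phaseNormSq u v a := by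
    have hle : ‖v + (B u + u)‖ ≤ (1 + ‖B‖) * (‖v‖ + ‖u‖) := by
      have hBv : 0 ≤ ‖B‖ * ‖v‖ := by positivity
      linarith [norm_add_le v (B u + u), norm_add_le (B u) u, B.le_opNorm u]
    calc ‖v + (B u + u)‖ ^ 2 ≤ ((1 + ‖B‖) * (‖v‖ + ‖u‖)) ^ 2 := by gcongr
      _ = (1 + ‖B‖) ^ 2 * (‖v‖ + ‖u‖) ^ 2 := mul_pow _ _ _
      _ ≤ (1 + ‖B‖) ^ 2 * (2 * phaseNormSq u v a) := by
        rw [phaseNormSq, waveEnergy]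
        gcongr
        linarith [add_sq_le (a := ‖v‖) (b := ‖u‖), hΓ.nonneg hu]
      _ = _ := by ring
  have hphase : ‖u‖ ^ 2 ≤ phaseNormSq u v a := le_add_of_nonneg_right (waveEnergy_nonneg hΓ hu v)
  rw [phaseNormSq, waveEnergy]
  linarith [norm_sub_sq_le_two_mul x u, hB.inner_nonneg x, hΓ.nonneg hx]

namespace IsDampedWave

variable {u v a u₂ v₂ a₂ : ℝ → H}

theorem sub (hu : IsDampedWave Γ B u v a) (hu₂ : IsDampedWave Γ B u₂ v₂ a₂) :
    IsDampedWave Γ B (u - u₂) (v - v₂) (a - a₂) where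
  mem t ht := Γ.sub_mem (hu.mem t ht) (hu₂.mem t ht)
  hasDeriv t ht := (hu.hasDeriv t ht).sub (hu₂.hasDeriv t ht)
  hasDeriv_velocity t ht :=
    ((hu.hasDeriv_velocity t ht).sub (hu₂.hasDeriv_velocity t ht)).congr_deriv <| by
      simp only [Pi.sub_apply, map_sub]
      abel
  continuousOn := hu.continuousOn.sub hu₂.continuousOn

theorem continuousOn_position (hu : IsDampedWave Γ B u v a) : ContinuousOn u (Ici 0) :=
  fun t ht => (hu.hasDeriv t ht).continuousWithinAt

theorem continuousOn_velocity (hu : IsDampedWave Γ B u v a) : ContinuousOn v (Ici 0) :=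
  fun t ht => (hu.hasDeriv_velocity t ht).continuousWithinAt

theorem hasDerivWithinAt_energy (hΓ : IsNonnegSelfAdjoint Γ) (hu : IsDampedWave Γ B u v a) {t : ℝ}
    (ht : t ∈ Ici 0) : HasDerivWithinAt (fun s => waveEnergy (u s) (v s) (a s))
      (-(2 * ⟪B (v t), v t⟫_ℝ)) (Ici 0) t := by
  refine ((hu.hasDeriv_velocity t ht).norm_sq.add (hΓ.hasDerivWithinAt_inner ht hu.mem
    (hu.hasDeriv t ht) (hu.continuousOn t ht))).congr_deriv ?_
  rw [inner_sub_right, inner_neg_right, real_inner_comm (a t), real_inner_comm (B (v t))]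
  ring

theorem continuousOn_energy (hΓ : IsNonnegSelfAdjoint Γ) (hu : IsDampedWave Γ B u v a) :
    ContinuousOn (fun s => waveEnergy (u s) (v s) (a s)) (Ici 0) :=
  fun _ ht => (hu.hasDerivWithinAt_energy hΓ ht).continuousWithinAt

theorem hasDerivWithinAt_lyapunov (hΓ : IsNonnegSelfAdjoint Γ)
    (hB : (B : H →ₗ[ℝ] H).IsSymmetric) (hu : IsDampedWave Γ B u v a) {t : ℝ} (ht : t ∈ Ici 0) :
    HasDerivWithinAt (fun s => waveLyapunov B c (u s) (v s) (a s))
      (2 * ‖v t‖ ^ 2 - 2 * ⟪a t, u t⟫_ℝ - 4 / c * ⟪B (v t), v t⟫_ℝ) (Ici 0) t := by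
  refine ((((hu.hasDerivWithinAt_energy hΓ ht).const_mul (2 / c)).add
    (((hu.hasDeriv_velocity t ht).inner ℝ (hu.hasDeriv t ht)).const_mul 2)).add
    (hasDerivWithinAt_inner_map_self hB (hu.hasDeriv t ht))).congr_deriv ?_
  rw [real_inner_self_eq_norm_sq, inner_sub_left, inner_neg_left,
    inner_map_comm hB (v t) (u t)]
  ring

-- The functional `L + t e` decreases, for the Lyapunov function `L` and the energy `e`.
theorem lyapunov_add_integral_le (hΓ : IsNonnegSelfAdjoint Γ) (hB : IsCoerciveSymmetric B c)
    (hu : IsDampedWave Γ B u v a) {T : ℝ} (hT : 0 ≤ T) :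
    waveLyapunov B c (u T) (v T) (a T) + 2 * c * ∫ t in 0..T, t * ‖v t‖ ^ 2 ≤
      waveLyapunov B c (u 0) (v 0) (a 0) := by
  have hcv := hu.continuousOn_velocity
  have hmono := add_integral_le_add_integral_of_deriv_add_le hT
    (f := fun t => waveLyapunov B c (u t) (v t) (a t) + t * waveEnergy (u t) (v t) (a t))
    (p := fun t => 2 * c * (t * ‖v t‖ ^ 2)) (q := fun _ => 0)
    (fun t ht => (hu.hasDerivWithinAt_lyapunov hΓ hB.symm ht).add
      ((hasDerivWithinAt_id t _).mul (hu.hasDerivWithinAt_energy hΓ ht)))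
    (by fun_prop) (by fun_prop) (fun t ht => by
      have hL := deriv_lyapunov_le hB (u t) (v t) (a t)
      have he := waveEnergy_nonneg hΓ (hu.mem t ht) (v t)
      have hBv := mul_le_mul_of_nonneg_left (hB.le_inner (v t)) (mem_Ici.1 ht)
      simp only [id]
      linarith)
  simp only [intervalIntegral.integral_const_mul, intervalIntegral.integral_zero, zero_mul,
    add_zero] at hmono
  linarith [mul_nonneg hT (waveEnergy_nonneg hΓ (hu.mem T hT) (v T))]

-- With `L ≤ k (‖u‖² + e)`, the weight `t² + k²` absorbs the error `2 t k e` by AM-GM.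
theorem sq_mul_lyapunov_add_integral_le (hΓ : IsNonnegSelfAdjoint Γ)
    (hB : IsCoerciveSymmetric B c) (hu : IsDampedWave Γ B u v a) {T : ℝ} (hT : 0 ≤ T) :
    T ^ 2 * waveLyapunov B c (u T) (v T) (a T) +
        ∫ t in 0..T, t ^ 2 * waveEnergy (u t) (v t) (a t) ≤
      (2 / c + 1 + ‖B‖) ^ 2 * waveLyapunov B c (u 0) (v 0) (a 0) +
        2 * (2 / c + 1 + ‖B‖) * ∫ t in 0..T, t * ‖u t‖ ^ 2 := by
  set k := 2 / c + 1 + ‖B‖ with hk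
  have hcu := hu.continuousOn_position
  have hce := hu.continuousOn_energy hΓ
  have hmono := add_integral_le_add_integral_of_deriv_add_le hT
    (f := fun t => (t ^ 2 + k ^ 2) * waveLyapunov B c (u t) (v t) (a t))
    (p := fun t => t ^ 2 * waveEnergy (u t) (v t) (a t)) (q := fun t => 2 * k * (t * ‖u t‖ ^ 2))
    (fun t ht => ((hasDerivAt_pow 2 t).hasDerivWithinAt.add_const (k ^ 2)).mul
      (hu.hasDerivWithinAt_lyapunov hΓ hB.symm ht))
    (by fun_prop) (by fun_prop) (fun t ht => by
      have ht0 : 0 ≤ t := ht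
      have hL' := mul_le_mul_of_nonneg_left (deriv_lyapunov_le hB (u t) (v t) (a t))
        (add_nonneg (sq_nonneg t) (sq_nonneg k))
      have hL := mul_le_mul_of_nonneg_left (waveLyapunov_le hΓ hB (hu.mem t ht) (v t)) ht0
      have he := waveEnergy_nonneg hΓ (hu.mem t ht) (v t)
      rw [phaseNormSq, ← hk] at hL
      push_cast
      nlinarith [mul_nonneg he (sq_nonneg (t - k)), mul_nonneg he (sq_nonneg k)])
  have hLT : 0 ≤ k ^ 2 * waveLyapunov B c (u T) (v T) (a T) :=
    mul_nonneg (sq_nonneg k) ((mul_nonneg (half_pos hB.pos).le (sq_nonneg _)).trans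
      (half_mul_norm_sq_le_waveLyapunov hΓ hB (hu.mem T hT) (v T)))
  simp only [intervalIntegral.integral_const_mul, ne_eq, OfNat.ofNat_ne_zero,
    not_false_eq_true, zero_pow, zero_add] at hmono
  linarith

theorem integral_pow_three_mul_norm_velocity_sq_le (hΓ : IsNonnegSelfAdjoint Γ)
    (hB : IsCoerciveSymmetric B c) (hu : IsDampedWave Γ B u v a) {T : ℝ} (hT : 0 ≤ T) :
    2 * c * ∫ t in 0..T, t ^ 3 * ‖v t‖ ^ 2 ≤
      3 * ∫ t in 0..T, t ^ 2 * waveEnergy (u t) (v t) (a t) := by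
  have hcv := hu.continuousOn_velocity
  have hce := hu.continuousOn_energy hΓ
  have hmono := add_integral_le_add_integral_of_deriv_add_le hT
    (f := fun t => t ^ 3 * waveEnergy (u t) (v t) (a t))
    (p := fun t => 2 * c * (t ^ 3 * ‖v t‖ ^ 2))
    (q := fun t => 3 * (t ^ 2 * waveEnergy (u t) (v t) (a t)))
    (fun t ht => (hasDerivAt_pow 3 t).hasDerivWithinAt.mul (hu.hasDerivWithinAt_energy hΓ ht))
    (by fun_prop) (by fun_prop) (fun t ht => by
      have hBv := mul_le_mul_of_nonneg_left (hB.le_inner (v t)) (pow_nonneg (mem_Ici.1 ht) 3)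
      push_cast
      linarith)
  simp only [intervalIntegral.integral_const_mul, ne_eq, OfNat.ofNat_ne_zero, not_false_eq_true,
    zero_pow, zero_mul, zero_add] at hmono
  linarith [mul_nonneg (pow_nonneg hT 3) (waveEnergy_nonneg hΓ (hu.mem T hT) (v T))]

theorem norm_sq_add_integral_le (hΓ : IsNonnegSelfAdjoint Γ) (hB : IsCoerciveSymmetric B c)
    (hu : IsDampedWave Γ B u v a) {T : ℝ} (hT : 0 ≤ T) :
    c / 2 * ‖u T‖ ^ 2 + 2 * c * ∫ t in 0..T, t * ‖v t‖ ^ 2 ≤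
      (2 / c + 1 + ‖B‖) * phaseNormSq (u 0) (v 0) (a 0) := by
  linarith [hu.lyapunov_add_integral_le hΓ hB hT,
    half_mul_norm_sq_le_waveLyapunov hΓ hB (hu.mem T hT) (v T),
    waveLyapunov_le hΓ hB (hu.mem 0 self_mem_Ici) (v 0)]

theorem sq_mul_norm_sq_add_integral_le (hΓ : IsNonnegSelfAdjoint Γ)
    (hB : IsCoerciveSymmetric B c) (hu : IsDampedWave Γ B u v a) {T : ℝ} (hT : 0 ≤ T) :
    c / 2 * (T ^ 2 * ‖u T‖ ^ 2) + c / 2 * ∫ t in 0..T, t ^ 3 * ‖v t‖ ^ 2 ≤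
      (2 / c + 1 + ‖B‖) ^ 3 * phaseNormSq (u 0) (v 0) (a 0) +
        2 * (2 / c + 1 + ‖B‖) * ∫ t in 0..T, t * ‖u t‖ ^ 2 := by
  have hdecay := hu.sq_mul_lyapunov_add_integral_le hΓ hB hT
  have hvelocity := hu.integral_pow_three_mul_norm_velocity_sq_le hΓ hB hT
  have hT2 := mul_le_mul_of_nonneg_left
    (half_mul_norm_sq_le_waveLyapunov hΓ hB (hu.mem T hT) (v T)) (sq_nonneg T)
  have h0 := mul_le_mul_of_nonneg_left (waveLyapunov_le hΓ hB (hu.mem 0 self_mem_Ici) (v 0))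
    (sq_nonneg (2 / c + 1 + ‖B‖))
  have hJ : 0 ≤ ∫ t in 0..T, t ^ 2 * waveEnergy (u t) (v t) (a t) :=
    intervalIntegral.integral_nonneg hT
      fun t ht => mul_nonneg (sq_nonneg t) (waveEnergy_nonneg hΓ (hu.mem t ht.1) (v t))
  linarith

theorem exists_decay_const (hΓ : IsNonnegSelfAdjoint Γ) (hB : IsCoerciveSymmetric B c) :
    ∃ K ≥ 0, ∀ {x y w b b' : ℝ → H}, IsDampedWave Γ B x y b → IsDampedWave Γ B y w b' →
      ∀ {M T : ℝ}, phaseNormSq (x 0) (y 0) (b 0) ≤ M → phaseNormSq (y 0) (w 0) (b' 0) ≤ M → 0 ≤ T →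
        ‖x T‖ ^ 2 ≤ K * M ∧ T ^ 2 * ‖y T‖ ^ 2 ≤ K * M ∧
        ∫ t in 0..T, t * ‖y t‖ ^ 2 ≤ K * M ∧ ∫ t in 0..T, t ^ 3 * ‖w t‖ ^ 2 ≤ K * M := by
  have hc := hB.pos
  set k := 2 / c + 1 + ‖B‖ with hk
  have hk0 : 0 < k := by positivity
  refine ⟨2 / c * (k + (k ^ 3 + k ^ 2 / c)), by positivity, ?_⟩
  intro x y w b b' hx hy M T hxM hyM hT
  have hxT := (hx.norm_sq_add_integral_le hΓ hB hT).trans (mul_le_mul_of_nonneg_left hxM hk0.le)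
  have hyT := hy.sq_mul_norm_sq_add_integral_le hΓ hB hT
  rw [← hk] at hxT hyT
  have hy0 : k ^ 3 * phaseNormSq (y 0) (w 0) (b' 0) ≤ k ^ 3 * M := by gcongr
  set I₁ := ∫ t in 0..T, t * ‖y t‖ ^ 2
  set I₃ := ∫ t in 0..T, t ^ 3 * ‖w t‖ ^ 2
  have hI₁ : 0 ≤ c / 2 * I₁ := mul_nonneg (half_pos hc).le
    (intervalIntegral.integral_nonneg hT fun t ht => mul_nonneg ht.1 (sq_nonneg _))
  have hI₃ : 0 ≤ c / 2 * I₃ := mul_nonneg (half_pos hc).le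
    (intervalIntegral.integral_nonneg hT fun t ht => mul_nonneg (pow_nonneg ht.1 3) (sq_nonneg _))
  have hx2 : 0 ≤ c / 2 * ‖x T‖ ^ 2 := by positivity
  have hy2 : 0 ≤ c / 2 * (T ^ 2 * ‖y T‖ ^ 2) := by positivity
  have hkI₁ : 2 * k * I₁ ≤ k ^ 2 / c * M :=
    calc 2 * k * I₁ = k / c * (2 * c * I₁) := by field_simp
      _ ≤ k / c * (k * M) :=
        mul_le_mul_of_nonneg_left (by linarith) (by positivity)
      _ = k ^ 2 / c * M := by ring
  have hscale : ∀ {X}, c / 2 * X ≤ k * M + (k ^ 3 + k ^ 2 / c) * M →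
      X ≤ 2 / c * (k + (k ^ 3 + k ^ 2 / c)) * M := fun h => by
    rw [← le_inv_mul_iff₀ (half_pos hc), inv_div] at h
    linarith
  refine ⟨hscale ?_, hscale ?_, hscale ?_, hscale ?_⟩ <;> linarith

-- `x` is `u` under the resolvent at `1` of the wave generator, so that `u = x - x'`.
theorem exists_resolvent [CompleteSpace H] (hΓ : IsNonnegSelfAdjoint Γ)
    (hB : IsCoerciveSymmetric B c) (hu : IsDampedWave Γ B u v a) :
    ∃ x b : ℝ → H, IsDampedWave Γ B x (x - u) b ∧
      b 0 + (B (x 0) + x 0) = v 0 + (B (u 0) + u 0) := by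
  obtain ⟨x₀, b₀, hmem₀, heq₀⟩ := hΓ.exists_mem_add_eq
    (K := B + ContinuousLinearMap.id ℝ H) (fun x => by
      simpa [inner_add_left, real_inner_self_eq_norm_sq] using hB.inner_nonneg x)
    (v 0 + (B (u 0) + u 0))
  replace heq₀ : b₀ + (B x₀ + x₀) = v 0 + (B (u 0) + u 0) := heq₀
  obtain ⟨x, rfl, hx⟩ := exists_solution_deriv_eq_self_sub hu.continuousOn_position x₀
  have hy : ∀ t ∈ Ici 0, HasDerivWithinAt (x - u) (x t - u t - v t) (Ici 0) t :=
    fun t ht => (hx t ht).sub (hu.hasDeriv t ht)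
  let b : ℝ → H := fun t => v t - (x t - u t) - B (x t - u t)
  have hb : ∀ t ∈ Ici 0, HasDerivWithinAt b (b t - a t) (Ici 0) t := fun t ht => by
    refine (((hu.hasDeriv_velocity t ht).sub (hy t ht)).sub
      (B.hasFDerivAt.comp_hasDerivWithinAt t (hy t ht))).congr_deriv ?_
    simp only [b, map_sub]
    abel
  have hb0 : b 0 = b₀ := by
    rw [eq_sub_of_add_eq heq₀]
    simp only [b, map_sub]
    abel
  refine ⟨x, b, ⟨fun t ht => ?_, hx, fun t ht => (hy t ht).congr_deriv ?_,
    fun t ht => (hb t ht).continuousWithinAt⟩, hb0 ▸ heq₀⟩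
  · exact mem_of_hasDerivWithinAt_self_sub hΓ.isClosed (x := fun t => (x t, b t))
      (u := fun t => (u t, a t)) (fun s hs => (hx s hs).prodMk (hb s hs)) hu.mem
      (by simpa only [hb0] using hmem₀) ht
  · simp only [b, Pi.sub_apply]
    abel

theorem velocity_eq {x y w b b' : ℝ → H} (hx : IsDampedWave Γ B x y b)
    (hy : IsDampedWave Γ B y w b') {t : ℝ} (ht : t ∈ Ici 0) : w t = -b t - B (y t) :=
  (uniqueDiffOn_Ici (0 : ℝ) t ht).eq_deriv _ (hy.hasDeriv t ht) (hx.hasDeriv_velocity t ht)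

theorem isForcedHeat {x y w b b' : ℝ → H} (hx : IsDampedWave Γ B x y b)
    (hy : IsDampedWave Γ B y w b') : IsForcedHeat Γ B (-w) x y where
  mem t ht := by simpa [hx.velocity_eq hy ht] using hx.mem t ht
  hasDeriv := hx.hasDeriv

-- The source `-w = -x''` of the heat equation for `x - h` is integrated twice; the compatibility
-- of the initial data makes the primitives `-x'` and `B x₀ + x₀ - x` the right ones.
theorem exists_primitives_sub_heat [CompleteSpace H] (hΓ : IsClosed (Γ : Set (H × H)))
    {x y w b b' h g : ℝ → H} (hx : IsDampedWave Γ B x y b) (hy : IsDampedWave Γ B y w b')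
    (hh : IsForcedHeat Γ B 0 h g) (h0 : B (h 0) = B (x 0) + y 0 + b 0) :
    ∃ d₂ d₁ : ℝ → H, d₂ 0 = 0 ∧ IsForcedHeat Γ B (fun t => B (x 0) + x 0 - x t) d₂ d₁ ∧
      IsForcedHeat Γ B (-y) d₁ (x - h) ∧ IsForcedHeat Γ B (-w) (x - h) (y - g) := by
  have hd : IsForcedHeat Γ B (-w) (x - h) (y - g) := by
    simpa only [sub_zero] using (hx.isForcedHeat hy).sub hh
  obtain ⟨d₁, hd₁0, hd₁⟩ := exists_primitive_of_continuousOn_Ici hd.continuousOn (x 0)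
  have hheat₁ : IsForcedHeat Γ B (-y) d₁ (x - h) :=
    hd.primitive hΓ hd₁ (fun t ht => (hy.hasDeriv t ht).neg) <| by
      convert hx.mem 0 self_mem_Ici using 2
      · simp only [Pi.neg_apply, Pi.sub_apply, map_sub, h0]
        abel
  obtain ⟨d₂, hd₂0, hd₂⟩ := exists_primitive_of_continuousOn_Ici hheat₁.continuousOn 0
  refine ⟨d₂, d₁, hd₂0, hheat₁.primitive hΓ hd₂ (fun t ht => (hx.hasDeriv t ht).const_sub _) ?_,
    hheat₁, hd⟩
  simp only [hd₂0, hd₁0, add_sub_cancel_right, sub_self]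
  exact Γ.zero_mem

theorem exists_sub_heat_const [CompleteSpace H] (hΓ : IsNonnegSelfAdjoint Γ)
    (hB : IsCoerciveSymmetric B c) :
    ∃ K ≥ 0, ∀ {x y w b b' h g : ℝ → H}, IsDampedWave Γ B x y b → IsDampedWave Γ B y w b' →
      IsForcedHeat Γ B 0 h g → B (h 0) = B (x 0) + y 0 + b 0 →
      ∀ {M T : ℝ}, phaseNormSq (x 0) (y 0) (b 0) ≤ M → phaseNormSq (y 0) (w 0) (b' 0) ≤ M → 0 < T →
        T ^ 2 * ‖x T - h T‖ ^ 2 ≤ K * M ∧ T ^ 2 * ‖y T‖ ^ 2 ≤ K * M := by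
  obtain ⟨K, hK, hdecay⟩ := exists_decay_const hΓ hB
  have hc := hB.pos
  set k := ((3 * ‖B‖ + 1) * (((‖B‖ + 1) * (c⁻¹ * c⁻¹) + (1 + c⁻¹)) * c⁻¹) + 1) * c⁻¹ with hk
  have hk0 : 0 ≤ k := by positivity
  set m := 2 * (‖B‖ + 1) ^ 2 + 2
  have hm1 : 1 ≤ m := by nlinarith [sq_nonneg (‖B‖ + 1)]
  refine ⟨k * (m * K) + K, by positivity, ?_⟩
  intro x y w b b' h g hx hy hh h0 M T hxM hyM hT
  have hM : 0 ≤ M := (phaseNormSq_nonneg hΓ (hx.mem 0 self_mem_Ici) (y 0)).trans hxM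
  have hKM : 0 ≤ K * M := mul_nonneg hK hM
  have hKm : K * M ≤ m * (K * M) := le_mul_of_one_le_left hKM hm1
  obtain ⟨-, hyT, hIy, hIw⟩ := hdecay hx hy hxM hyM hT.le
  obtain ⟨d₂, d₁, hd₂0, hd₂, hd₁, hd⟩ := hx.exists_primitives_sub_heat hΓ.isClosed hy hh h0
  have hsource : ∀ t ∈ Ici 0, ‖B (x 0) + x 0 - x t‖ ^ 2 ≤ m * (K * M) := fun t ht => by
    have hx0 := (hdecay hx hy hxM hyM le_rfl).1
    have hxt := (hdecay hx hy hxM hyM ht).1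
    have hcoef := mul_le_mul_of_nonneg_left hx0 (sq_nonneg (‖B‖ + 1))
    linarith [norm_map_add_self_sub_sq_le B (x 0) (x t)]
  have hcx := hx.continuousOn_position
  have hdT := IsForcedHeat.sq_mul_norm_sq_le_of_primitives hΓ hB hd₂ hd₁ hd (by fun_prop)
    hx.continuousOn_velocity.neg hy.continuousOn_velocity.neg hd₂0 hT hsource
    (by simpa using hIy.trans hKm) (by simpa using hIw.trans hKm)
  rw [← hk] at hdT
  have hkm : 0 ≤ k * (m * (K * M)) := mul_nonneg hk0 (hKM.trans hKm)
  simp only [Pi.sub_apply] at hdT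
  constructor <;> linarith

theorem exists_diffusion_const [CompleteSpace H] (hΓ : IsNonnegSelfAdjoint Γ)
    (hB : IsCoerciveSymmetric B c) :
    ∃ K ≥ 0, ∀ {u v a h g : ℝ → H}, IsDampedWave Γ B u v a → IsForcedHeat Γ B 0 h g →
      B (h 0) = B (u 0) + v 0 → ∀ {T : ℝ}, 0 < T →
        T ^ 2 * ‖u T - h T‖ ^ 2 ≤ K * phaseNormSq (u 0) (v 0) (a 0) := by
  obtain ⟨K, hK, hbound⟩ := exists_sub_heat_const hΓ hB
  refine ⟨4 * K * (2 * (6 * (1 + ‖B‖) ^ 2 + 2) + 2), by positivity, ?_⟩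
  intro u v a h g hu hh h0 T hT
  obtain ⟨x, b, hx, heq⟩ := hu.exists_resolvent hΓ hB
  have hy := hx.sub hu
  have hu₀ := hu.mem 0 self_mem_Ici
  have hx₀ := hx.mem 0 self_mem_Ici
  have hxM : phaseNormSq (x 0) ((x - u) 0) (b 0) ≤
      (6 * (1 + ‖B‖) ^ 2 + 2) * phaseNormSq (u 0) (v 0) (a 0) :=
    phaseNormSq_le_of_resolvent_eq hΓ hB hu₀ hx₀ heq
  have hyM : phaseNormSq ((x - u) 0) ((x - u - v) 0) ((b - a) 0) ≤
      2 * phaseNormSq (x 0) ((x - u) 0) (b 0) + 2 * phaseNormSq (u 0) (v 0) (a 0) :=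
    phaseNormSq_sub_le hΓ hx₀ hu₀
  have hu_nonneg := phaseNormSq_nonneg hΓ hu₀ (v 0)
  have hx_nonneg := phaseNormSq_nonneg hΓ hx₀ ((x - u) 0)
  have hinit : B (h 0) = B (x 0) + (x - u) 0 + b 0 := by
    rw [h0, eq_sub_of_add_eq heq, Pi.sub_apply]
    abel
  obtain ⟨hxh, hyT⟩ := hbound hx hy hh hinit
    (M := (2 * (6 * (1 + ‖B‖) ^ 2 + 2) + 2) * phaseNormSq (u 0) (v 0) (a 0))
    (by linarith) (by linarith) hT
  have hsplit := norm_sub_sq_le_two_mul (x T - h T) ((x - u) T)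
  have hdiff : x T - h T - (x - u) T = u T - h T := by
    rw [Pi.sub_apply]
    abel
  rw [hdiff] at hsplit
  linarith [mul_le_mul_of_nonneg_left hsplit (sq_nonneg T)]

end IsDampedWave

end Wave

section Complex

attribute [local instance] InnerProductSpace.complexToReal

variable {H : Type*} [NormedAddCommGroup H] [InnerProductSpace ℂ H]

theorem real_inner_eq_re (x y : H) : ⟪x, y⟫_ℝ = (⟪x, y⟫_ℂ).re := rfl

-- Testing with both `(x, y)` and `(i x, i y)` recovers the complex inner products from their real
-- parts.
theorem adjoint_restrictScalars_real (Γ : Submodule ℂ (H × H)) :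
    (Γ.restrictScalars ℝ).adjoint = Γ.adjoint.restrictScalars ℝ := by
  ext p
  simp only [Submodule.mem_adjoint_iff, Submodule.restrictScalars_mem, real_inner_eq_re,
    sub_eq_zero]
  refine ⟨fun h x y hxy => Complex.ext (h x y hxy) ?_, fun h x y hxy => by rw [h x y hxy]⟩
  have hI := h _ _ (Γ.smul_mem Complex.I hxy)
  simpa [inner_smul_left] using hI

variable {A : H →ₗ.[ℂ] H} {B S R : H →L[ℂ] H} {c : ℝ}

theorem map_eq_of_sq_eq_of_comp_eq_id (hS : S ∘L S = B) (hR : S ∘L R = ContinuousLinearMap.id ℂ H)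
    (x : H) : B (R x) = S x := by
  rw [← hS, ContinuousLinearMap.comp_apply]
  exact congrArg S (DFunLike.congr_fun hR x)

variable [CompleteSpace H]

theorem isNonnegSelfAdjoint_graph (hA : IsSelfAdjoint A)
    (hA_nonneg : ∀ u : A.domain, 0 ≤ (⟪A u, (u : H)⟫_ℂ).re) :
    IsNonnegSelfAdjoint (A.graph.restrictScalars ℝ) where
  adjoint_eq := by
    rw [adjoint_restrictScalars_real, ← LinearPMap.adjoint_graph_eq_graph_adjoint hA.dense_domain,
      LinearPMap.isSelfAdjoint_def.1 hA]
  nonneg x y hxy := by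
    obtain ⟨u, rfl, rfl⟩ := (LinearPMap.mem_graph_iff A).1 hxy
    exact hA_nonneg u

theorem isCoerciveSymmetric_restrictScalars (hB : IsSelfAdjoint B) (hc : 0 < c)
    (hB_pos : ∀ u : H, c * ‖u‖ ^ 2 ≤ (⟪B u, u⟫_ℂ).re) :
    IsCoerciveSymmetric (B.restrictScalars ℝ) c where
  symm x y := congrArg Complex.re (hB.isSymmetric x y)
  pos := hc
  le_inner := hB_pos

theorem isDampedWave_restrictScalars (sol : DampedWaveSolution A B) :
    IsDampedWave (A.graph.restrictScalars ℝ) (B.restrictScalars ℝ) sol.u sol.du sol.Au where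
  mem t ht := sol.hAu t ht ▸ A.mem_graph ⟨sol.u t, sol.mem t ht⟩
  hasDeriv := sol.hdu
  hasDeriv_velocity t ht := (sol.hddu t ht).congr_deriv <| by
    rw [← neg_add', eq_neg_iff_add_eq_zero, ← add_assoc]
    exact sol.eqn t ht
  continuousOn := sol.cont_Au

theorem isForcedHeat_restrictScalars (hS : S ∘L S = B) (hR : S ∘L R = ContinuousLinearMap.id ℂ H)
    (hs : HeatSolution A R) :
    IsForcedHeat (A.graph.restrictScalars ℝ) (B.restrictScalars ℝ) 0 (fun t => R (hs.v t))
      (fun t => R (hs.dv t)) where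
  mem t ht := by
    have hSR : ∀ x, S (R x) = x := DFunLike.congr_fun hR
    have heq : A ⟨R (hs.v t), hs.mem t ht⟩ = 0 - B (R (hs.dv t)) := by
      rw [zero_sub, eq_neg_iff_add_eq_zero, map_eq_of_sq_eq_of_comp_eq_id hS hR, add_comm]
      simpa [hSR] using congrArg S (hs.eqn t ht)
    exact heq ▸ A.mem_graph ⟨R (hs.v t), hs.mem t ht⟩
  hasDeriv t ht := (R.restrictScalars ℝ).hasFDerivAt.comp_hasDerivWithinAt t (hs.hdv t ht)

theorem stmt5_general (hA : IsSelfAdjoint A)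
    (hA_nonneg : ∀ u : A.domain, 0 ≤ (⟪A u, (u : H)⟫_ℂ).re) (hB : IsSelfAdjoint B) (hc : 0 < c)
    (hB_pos : ∀ u : H, c * ‖u‖ ^ 2 ≤ (⟪B u, u⟫_ℂ).re) (hS : S ∘L S = B)
    (hR : S ∘L R = ContinuousLinearMap.id ℂ H) :
    ∃ C > 0, ∀ (sol : DampedWaveSolution A B) (hs : HeatSolution A R),
      hs.v 0 = S (sol.u 0) + R (sol.du 0) → ∀ t > 0, ‖sol.u t - R (hs.v t)‖ ≤
        C * t⁻¹ * (‖sol.u 0‖ + √(⟪sol.Au 0, sol.u 0⟫_ℂ).re + ‖sol.du 0‖) := by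
  have hΓ := isNonnegSelfAdjoint_graph hA hA_nonneg
  obtain ⟨K, hK, hbound⟩ := IsDampedWave.exists_diffusion_const hΓ
    (isCoerciveSymmetric_restrictScalars hB hc hB_pos)
  refine ⟨√K + 1, by positivity, fun sol hs h0 t ht => ?_⟩
  have hwave := isDampedWave_restrictScalars sol
  have hinit : B (R (hs.v 0)) = B (sol.u 0) + sol.du 0 := by
    have hSR : ∀ x, S (R x) = x := DFunLike.congr_fun hR
    rw [map_eq_of_sq_eq_of_comp_eq_id hS hR, h0, map_add, hSR, ← DFunLike.congr_fun hS (sol.u 0),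
      ContinuousLinearMap.comp_apply]
  have hsq := (hbound hwave (isForcedHeat_restrictScalars hS hR hs) hinit ht).trans
    (mul_le_mul_of_nonneg_left (phaseNormSq_le_sq (hΓ.nonneg (hwave.mem 0 self_mem_Ici)) _) hK)
  rw [real_inner_eq_re] at hsq
  set N := ‖sol.u 0‖ + √(⟪sol.Au 0, sol.u 0⟫_ℂ).re + ‖sol.du 0‖
  have hN : 0 ≤ N := by positivity
  rw [← Real.sq_sqrt hK, ← mul_pow, ← mul_pow] at hsq
  have hle := (sq_le_sq₀ (by positivity) (by positivity)).1 hsq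
  rw [mul_right_comm, ← div_eq_mul_inv, le_div_iff₀' ht]
  linarith

end Complex

/-- diffusion approximation with uniform rate `t⁻¹`. -/
theorem stmt5
    {H : Type*} [NormedAddCommGroup H] [InnerProductSpace ℂ H] [CompleteSpace H]
    (A : H →ₗ.[ℂ] H) (hA_sa : IsSelfAdjoint A)
    (hA_pos : ∀ u : A.domain, u ≠ 0 → 0 < (⟪A u, (u : H)⟫).re)
    (B : H →L[ℂ] H) (hB_sa : IsSelfAdjoint B)
    (c : ℝ) (hc : 0 < c)
    (hB_pos : ∀ u : H, c * ‖u‖ ^ 2 ≤ (⟪B u, u⟫).re)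
    -- `Bh` is the positive square root `B^{1/2}` of `B`, `Binvh` its inverse `B^{-1/2}`
    (Bh Binvh : H →L[ℂ] H)
    (hBh_sq : Bh ∘L Bh = B) (hBh_sa : IsSelfAdjoint Bh)
    (hBh_pos : ∀ u : H, 0 ≤ (⟪Bh u, u⟫).re)
    (hBinv₁ : Binvh ∘L Bh = ContinuousLinearMap.id ℂ H)
    (hBinv₂ : Bh ∘L Binvh = ContinuousLinearMap.id ℂ H)
    -- `B^{±1/2}` map `D(A)` into `D(A)` with the stated bounds
    (hBhD : ∀ u : A.domain, Bh (u : H) ∈ A.domain)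
    (hBinvD : ∀ u : A.domain, Binvh (u : H) ∈ A.domain)
    (C₀ : ℝ) (hC₀ : 0 < C₀)
    (hBhA : ∀ u : A.domain, ‖A ⟨Bh (u : H), hBhD u⟩‖ ≤ C₀ * (‖(u : H)‖ + ‖A u‖))
    (hBinvA : ∀ u : A.domain, ‖A ⟨Binvh (u : H), hBinvD u⟩‖ ≤ C₀ * (‖(u : H)‖ + ‖A u‖)) :
    ∃ C > (0:ℝ), ∀ (sol : DampedWaveSolution A B) (hs : HeatSolution A Binvh),
      hs.v 0 = Bh (sol.u 0) + Binvh (sol.du 0) →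
      ∀ t : ℝ, 1 < t →
        ‖sol.u t - Binvh (hs.v t)‖ ≤
          C * t⁻¹ * (‖sol.u 0‖ + Real.sqrt ((⟪sol.Au 0, sol.u 0⟫).re) + ‖sol.du 0‖) := by
  obtain ⟨C, hC, hbound⟩ := stmt5_general hA_sa
    (fun u => (eq_or_ne u 0).elim (fun hu => by simp [hu]) fun hu => (hA_pos u hu).le)
    hB_sa hc hB_pos hBh_sq hBinv₂
  exact ⟨C, hC, fun sol hs h0 t ht => hbound sol hs h0 t (one_pos.trans ht)⟩
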